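/- Let f_i : R^d → R be L-smooth, let γ ∈ (0, 1/(2L)], let T ≥ 1, let x^k, x^{k+1} ∈ R^d with ‖x^{k+1} − x^k‖ ≤ η for some η > 0, and define the local GD operator T_i(y) = y − (γ/T)∑_{j=0}^{T−1} ∇f_i(y^{(j)}), where y^{(0)} = y and y^{(j+1)} = y^{(j)} − (γ/T)∇f_i(y^{(j)}). Then ‖T_i(x^{k+1}) − T_i(x^k)‖ ≤ 2η. -/

import Mathlib

/-!
The operator `gdOp g γ T` is the endpoint of the local gradient-descent sequence: telescoping gives
`gdOp g γ T y = gdSeq g γ T y T`. One step `y ↦ y - (γ/T) • g y` is `(1 + γL/T)`-Lipschitz by the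
triangle inequality, so after `T` steps two trajectories have separated by a factor of at most
`(1 + γL/T) ^ T ≤ exp (γL) ≤ exp (1/2) ≤ 2`, the middle bound being `γL ≤ 1/2`.
-/

open Finset

/-- Local gradient-descent sequence starting at `y`:
`y⁽⁰⁾ = y`, `y⁽ʲ⁺¹⁾ = y⁽ʲ⁾ − (γ/T)·g(y⁽ʲ⁾)`. -/
noncomputable def gdSeq {d : ℕ}
    (g : EuclideanSpace ℝ (Fin d) → EuclideanSpace ℝ (Fin d)) (γ : ℝ) (T : ℕ)
    (y : EuclideanSpace ℝ (Fin d)) : ℕ → EuclideanSpace ℝ (Fin d)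
  | 0 => y
  | j + 1 => gdSeq g γ T y j - (γ / (T : ℝ)) • g (gdSeq g γ T y j)

/-- Local GD operator `T_i(y) = y − (γ/T) ∑_{j<T} g(y⁽ʲ⁾)`. -/
noncomputable def gdOp {d : ℕ}
    (g : EuclideanSpace ℝ (Fin d) → EuclideanSpace ℝ (Fin d)) (γ : ℝ) (T : ℕ)
    (y : EuclideanSpace ℝ (Fin d)) : EuclideanSpace ℝ (Fin d) :=
  y - (γ / (T : ℝ)) • ∑ j ∈ Finset.range T, g (gdSeq g γ T y j)

theorem gdSeq_eq_sub_sum {d : ℕ}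
    (g : EuclideanSpace ℝ (Fin d) → EuclideanSpace ℝ (Fin d)) (γ : ℝ) (T : ℕ)
    (y : EuclideanSpace ℝ (Fin d)) (n : ℕ) :
    gdSeq g γ T y n = y - (γ / (T : ℝ)) • ∑ j ∈ Finset.range n, g (gdSeq g γ T y j) := by
  induction n with
  | zero => simp [gdSeq]
  | succ k ih =>
    rw [Finset.sum_range_succ, smul_add, ← sub_sub, ← ih]
    rfl

theorem norm_gdSeq_sub_le {d : ℕ}
    (g : EuclideanSpace ℝ (Fin d) → EuclideanSpace ℝ (Fin d)) (L γ : ℝ) (T : ℕ)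
    (hL : 0 < L) (hγ : 0 < γ) (hlip : ∀ x y, ‖g x - g y‖ ≤ L * ‖x - y‖)
    (x y : EuclideanSpace ℝ (Fin d)) (n : ℕ) :
    ‖gdSeq g γ T x n - gdSeq g γ T y n‖ ≤ (1 + γ / T * L) ^ n * ‖x - y‖ := by
  induction n with
  | zero => simp [gdSeq]
  | succ k ih =>
    have ha : 0 ≤ γ / (T : ℝ) := by positivity
    set u := gdSeq g γ T x k with hu
    set v := gdSeq g γ T y k with hv
    calc ‖gdSeq g γ T x (k + 1) - gdSeq g γ T y (k + 1)‖
        = ‖(u - v) - (γ / (T : ℝ)) • (g u - g v)‖ := by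
          simp only [gdSeq, ← hu, ← hv, smul_sub]
          congr 1
          abel
      _ ≤ ‖u - v‖ + ‖(γ / (T : ℝ)) • (g u - g v)‖ := norm_sub_le _ _
      _ = ‖u - v‖ + γ / T * ‖g u - g v‖ := by
          rw [norm_smul, Real.norm_of_nonneg ha]
      _ ≤ ‖u - v‖ + γ / T * (L * ‖u - v‖) := by
          gcongr
          exact hlip u v
      _ = (1 + γ / T * L) * ‖u - v‖ := by ring
      _ ≤ (1 + γ / T * L) * ((1 + γ / T * L) ^ k * ‖x - y‖) := by gcongr
      _ = (1 + γ / T * L) ^ (k + 1) * ‖x - y‖ := by ring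

/-- Lipschitz-type stability of the local GD operator. -/
theorem stmt10 {d : ℕ} (fi : EuclideanSpace ℝ (Fin d) → ℝ)
    (g : EuclideanSpace ℝ (Fin d) → EuclideanSpace ℝ (Fin d))
    (L γ η : ℝ) (T : ℕ) (hL : 0 < L) (hγ : 0 < γ) (hγle : γ ≤ 1 / (2 * L))
    (hT : 1 ≤ T) (hη : 0 < η)
    (hgrad : ∀ x, HasGradientAt fi (g x) x)
    (hlip : ∀ x y, ‖g x - g y‖ ≤ L * ‖x - y‖)
    (xk xk1 : EuclideanSpace ℝ (Fin d)) (hx : ‖xk1 - xk‖ ≤ η) :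
    ‖gdOp g γ T xk1 - gdOp g γ T xk‖ ≤ 2 * η := by
  have hT0 : (T : ℝ) ≠ 0 := by positivity
  have hγL : γ * L ≤ 1 / 2 := by
    rw [le_div_iff₀ (by positivity)] at hγle
    linarith
  have hexp : Real.exp (1 / 2) ≤ 2 := by
    have h := Real.exp_one_lt_three
    have h2 : Real.exp (1 / 2) * Real.exp (1 / 2) = Real.exp 1 := by
      rw [← Real.exp_add]
      norm_num
    nlinarith [Real.exp_pos (1 / 2)]
  have hfac : (1 + γ / T * L) ^ T ≤ 2 :=
    calc (1 + γ / T * L) ^ T ≤ Real.exp (γ / T * L) ^ T := by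
          gcongr
          rw [add_comm]
          exact Real.add_one_le_exp _
      _ = Real.exp (γ * L) := by
          rw [← Real.exp_nat_mul]
          congr 1
          field_simp
      _ ≤ Real.exp (1 / 2) := Real.exp_le_exp.mpr hγL
      _ ≤ 2 := hexp
  have hop : ∀ y, gdOp g γ T y = gdSeq g γ T y T := fun y =>
    (gdSeq_eq_sub_sum g γ T y T).symm
  rw [hop, hop]
  exact (norm_gdSeq_sub_le g L γ T hL hγ hlip xk1 xk T).trans
    (mul_le_mul hfac hx (norm_nonneg _) zero_le_two)
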